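/- Let $K\subseteq\mathbb{R}^m$ be a nonempty closed convex cone with dual cone $K^*=\{y:\langle y,s\rangle\ge 0\ \forall s\in K\}$, let $d_K$ be the Euclidean distance to $K$ and $\Pi_K$ the Euclidean projection onto $K$. Let $A:\mathbb{R}^n\to\mathbb{R}^m$ be linear, $b\in\mathbb{R}^m$, let $\chi\subseteq\mathbb{R}^n$ be compact and convex, and let $p:\chi\to\mathbb{R}$ be convex and lower semicontinuous (for instance the restriction to $\chi$ of a finite convex function on $\mathbb{R}^n$). Assume that the conic program $$(P):\qquad \min\{p(x): Ax-b\in K,\ x\in\chi\}$$ is feasible, let $p^*$ be its optimal value, and let $y^*$ be a KKT point of $(P)$, that is, $y^*\in K^*$ and $\inf_{x\in\chi}\{p(x)-\langle y^*,Ax-b\rangle\}=p^*$. For $\mu>0$ put $$L_\mu(x,y)=p(x)+\tfrac{\mu}{2}\,d_K\!\left(Ax-b-\tfrac{y}{\mu}\right)^2-\tfrac{\|y\|_2^2}{2\mu},\qquad g_\mu(y)=\inf_{x\in\chi}L_\mu(x,y).$$ Let $\{\mu_k\}_{k\ge1}\subset(0,\infty)$ and $\{\xi_k\}_{k\ge1}\subset[0,\infty)$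 satisfy $B:=\sum_{k=1}^\infty\sqrt{2\xi_k\mu_k}<\infty$. Let $\{x_k\}_{k\ge1}\subseteq\chi$, and define $y_1=0$ and $$y_{k+1}=\mu_k\left(\Pi_K\!\left(Ax_k-b-\tfrac{y_k}{\mu_k}\right)-\left(Ax_k-b-\tfrac{y_k}{\mu_k}\right)\right),\qquad k\ge1.$$ If $L_{\mu_k}(x_k,y_k)\le g_{\mu_k}(y_k)+\xi_k$ for all $k\ge1$, then for all $k\ge1$ $$\|y_k-y^*\|_2\le B+\|y^*\|_2,\qquad\text{and hence}\qquad \|y_k\|_2\le B+2\|y^*\|_2 .$$ -/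

import Mathlib

open RealInnerProductSpace

/-- The dual cone `K* = {y : ⟪y, s⟫ ≥ 0 for all s ∈ K}`. -/
def dualCone {m : ℕ} (K : Set (EuclideanSpace ℝ (Fin m))) :
    Set (EuclideanSpace ℝ (Fin m)) :=
  {y | ∀ s ∈ K, 0 ≤ ⟪y, s⟫}

open Classical in
/-- The Euclidean projection `Π_K(v)`: the point of `K` nearest to `v`. It exists and is unique
for nonempty closed convex `K` (see `projK_spec` and `projK_unique`); where no nearest point
exists the value is `0`. -/
noncomputable def projK {m : ℕ} (K : Set (EuclideanSpace ℝ (Fin m)))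
    (v : EuclideanSpace ℝ (Fin m)) : EuclideanSpace ℝ (Fin m) :=
  if h : ∃ s ∈ K, ∀ t ∈ K, ‖v - s‖ ≤ ‖v - t‖ then h.choose else 0

theorem projK_spec {m : ℕ} {K : Set (EuclideanSpace ℝ (Fin m))} (hne : K.Nonempty)
    (hcl : IsClosed K) (v : EuclideanSpace ℝ (Fin m)) :
    projK K v ∈ K ∧ ∀ t ∈ K, ‖v - projK K v‖ ≤ ‖v - t‖ := by
  have h : ∃ s ∈ K, ∀ t ∈ K, ‖v - s‖ ≤ ‖v - t‖ := by
    obtain ⟨s, hs, hd⟩ := hcl.exists_infDist_eq_dist hne v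
    refine ⟨s, hs, fun t ht => ?_⟩
    rw [← dist_eq_norm, ← dist_eq_norm, ← hd]
    exact Metric.infDist_le_dist_of_mem ht
  unfold projK
  rw [dif_pos h]
  exact h.choose_spec

theorem projK_unique {m : ℕ} {K : Set (EuclideanSpace ℝ (Fin m))} (hne : K.Nonempty)
    (hcl : IsClosed K) (hcv : Convex ℝ K) (v s : EuclideanSpace ℝ (Fin m)) (hs : s ∈ K)
    (hmin : ∀ t ∈ K, ‖v - s‖ ≤ ‖v - t‖) : s = projK K v := by
  obtain ⟨hp, hpmin⟩ := projK_spec hne hcl v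
  have hmid := hmin _ (hcv hs hp (by norm_num : (0 : ℝ) ≤ 1 / 2)
    (by norm_num : (0 : ℝ) ≤ 1 / 2) (by norm_num))
  have heq : ‖v - s‖ = ‖v - projK K v‖ := le_antisymm (hmin _ hp) (hpmin _ hs)
  have hpar := parallelogram_law_with_norm ℝ (v - s) (v - projK K v)
  have h1 : v - ((1 / 2 : ℝ) • s + (1 / 2 : ℝ) • projK K v)
      = (1 / 2 : ℝ) • ((v - s) + (v - projK K v)) := by module
  have h2 : (v - s) - (v - projK K v) = projK K v - s := by abel
  rw [h1, norm_smul, Real.norm_of_nonneg (by norm_num : (0 : ℝ) ≤ 1 / 2)] at hmid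
  rw [h2, ← heq] at hpar
  have h0 : ‖projK K v - s‖ = 0 := by
    nlinarith [norm_nonneg (projK K v - s), norm_nonneg (v - s)]
  exact (sub_eq_zero.mp (norm_eq_zero.mp h0)).symm

/-- The penalty Lagrangian
`L_μ(x, y) = p(x) + (μ/2)·d_K(Ax - b - y/μ)² - ‖y‖²/(2μ)`. -/
noncomputable def Lpen {n m : ℕ}
    (A : EuclideanSpace ℝ (Fin n) →ₗ[ℝ] EuclideanSpace ℝ (Fin m))
    (b : EuclideanSpace ℝ (Fin m)) (K : Set (EuclideanSpace ℝ (Fin m)))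
    (p : EuclideanSpace ℝ (Fin n) → ℝ) (μ : ℝ)
    (x : EuclideanSpace ℝ (Fin n)) (y : EuclideanSpace ℝ (Fin m)) : ℝ :=
  p x + μ / 2 * (Metric.infDist (A x - b - μ⁻¹ • y) K) ^ 2 - ‖y‖ ^ 2 / (2 * μ)

/-- `g_μ(y) = inf_{x ∈ χ} L_μ(x, y)`. -/
noncomputable def gmu {n m : ℕ}
    (A : EuclideanSpace ℝ (Fin n) →ₗ[ℝ] EuclideanSpace ℝ (Fin m))
    (b : EuclideanSpace ℝ (Fin m)) (K : Set (EuclideanSpace ℝ (Fin m)))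
    (χ : Set (EuclideanSpace ℝ (Fin n)))
    (p : EuclideanSpace ℝ (Fin n) → ℝ) (μ : ℝ) (y : EuclideanSpace ℝ (Fin m)) : ℝ :=
  sInf ((fun x => Lpen A b K p μ x y) '' χ)

/-- The Lagrangian dual function `g₀(z) = inf_{x ∈ χ} { p(x) - ⟪z, Ax - b⟫ }`. -/
noncomputable def gzero {n m : ℕ}
    (A : EuclideanSpace ℝ (Fin n) →ₗ[ℝ] EuclideanSpace ℝ (Fin m))
    (b : EuclideanSpace ℝ (Fin m)) (χ : Set (EuclideanSpace ℝ (Fin n)))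
    (p : EuclideanSpace ℝ (Fin n) → ℝ) (z : EuclideanSpace ℝ (Fin m)) : ℝ :=
  sInf ((fun x => p x - ⟪z, A x - b⟫) '' χ)

/-- The optimal value `p* = inf { p(x) : x ∈ χ, Ax - b ∈ K }` of the conic program. -/
noncomputable def pstar {n m : ℕ}
    (A : EuclideanSpace ℝ (Fin n) →ₗ[ℝ] EuclideanSpace ℝ (Fin m))
    (b : EuclideanSpace ℝ (Fin m)) (K : Set (EuclideanSpace ℝ (Fin m)))
    (χ : Set (EuclideanSpace ℝ (Fin n)))
    (p : EuclideanSpace ℝ (Fin n) → ℝ) : ℝ :=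
  sInf (p '' {x ∈ χ | A x - b ∈ K})

/-- A KKT point of the conic program: `y ∈ K*` with `g₀(y) = p*`. -/
def IsKKTPoint {n m : ℕ}
    (A : EuclideanSpace ℝ (Fin n) →ₗ[ℝ] EuclideanSpace ℝ (Fin m))
    (b : EuclideanSpace ℝ (Fin m)) (K : Set (EuclideanSpace ℝ (Fin m)))
    (χ : Set (EuclideanSpace ℝ (Fin n)))
    (p : EuclideanSpace ℝ (Fin n) → ℝ) (y : EuclideanSpace ℝ (Fin m)) : Prop :=
  y ∈ dualCone K ∧ gzero A b χ p y = pstar A b K χ p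

/-!
Write `ℓ(x, z) = p(x) - ⟪z, Ax - b⟫`, let `s` be the projection in a multiplier step from `y` and
`y⁺` its result. Since `Ax - b = s + (y - y⁺)/μ`, completing the square gives the identity
`L_μ(x, y) = ℓ(x, z) + ⟪z, s⟫ + (‖y⁺ - z‖² - ‖y - z‖²)/(2μ)` for every `z`. At a KKT point `z` one
has `ℓ(x, z) ≥ p*` and `⟪z, s⟫ ≥ 0`, while `L_μ(u, y) ≤ p(u)` at every feasible `u`. A point `x`
that minimizes `L_μ(·, y)` up to `ξ` therefore satisfies `‖y⁺ - z‖² ≤ ‖y - z‖² + 2ξμ`.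
-/

section PenaltyLagrangian

variable {X E : Type*} [NormedAddCommGroup E]

/-- `s` is a nearest point of `K` to `v`; the Euclidean projection, where it is single-valued. -/
structure IsNearestPoint (K : Set E) (v s : E) : Prop where
  mem : s ∈ K
  norm_sub_le : ∀ t ∈ K, ‖v - s‖ ≤ ‖v - t‖

theorem IsNearestPoint.infDist_eq {K : Set E} {v s : E} (hs : IsNearestPoint K v s) :
    Metric.infDist v K = ‖v - s‖ := by
  refine le_antisymm ?_ ((Metric.le_infDist ⟨s, hs.mem⟩).2 fun t ht => ?_)
  · exact dist_eq_norm v s ▸ Metric.infDist_le_dist_of_mem hs.mem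
  · exact dist_eq_norm v t ▸ hs.norm_sub_le t ht

variable [InnerProductSpace ℝ E]

/-- The penalty Lagrangian of the program `min {p x : F x ∈ K}`, for an arbitrary constraint map
`F`; `Lpen A b` is the case `F x = A x - b`. -/
noncomputable def penaltyLagrangian (F : X → E) (K : Set E) (p : X → ℝ) (μ : ℝ) (x : X) (y : E) :
    ℝ :=
  p x + μ / 2 * Metric.infDist (F x - μ⁻¹ • y) K ^ 2 - ‖y‖ ^ 2 / (2 * μ)

/-- `q` is a multiplier update `μ (Π_K(v) - v)`, `v = F x - y/μ`, of the augmented Lagrangian method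
at `(x, y)`; a relation because the nearest point in `K` need not be unique. -/
def IsMultiplierUpdate (F : X → E) (K : Set E) (μ : ℝ) (x : X) (y q : E) : Prop :=
  ∃ s, IsNearestPoint K (F x - μ⁻¹ • y) s ∧ q = μ • (s - (F x - μ⁻¹ • y))

/-- `z` is a Lagrange multiplier (KKT point) of `min {p x : F x ∈ K, x ∈ χ}` with optimal value `v`:
it lies in the dual cone of `K` and closes the duality gap. Requiring both values to be genuine
infima makes the program feasible and excludes the default `sInf` of an unbounded set. -/
structure IsLagrangeMultiplier (F : X → E) (K : Set E) (χ : Set X) (p : X → ℝ) (v : ℝ) (z : E) :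
    Prop where
  inner_nonneg : ∀ s ∈ K, 0 ≤ ⟪z, s⟫
  isGLB_primal : IsGLB (p '' {x ∈ χ | F x ∈ K}) v
  isGLB_lagrangian : IsGLB ((fun x => p x - ⟪z, F x⟫) '' χ) v

variable {F : X → E} {K : Set E} {χ : Set X} {p : X → ℝ} {v μ ξ : ℝ} {x : X} {y z q s : E}

theorem penaltyLagrangian_eq_of_isNearestPoint (hμ : μ ≠ 0)
    (hs : IsNearestPoint K (F x - μ⁻¹ • y) s) :
    penaltyLagrangian F K p μ x y = p x - ⟪z, F x⟫ + ⟪z, s⟫ +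
      (‖μ • (s - (F x - μ⁻¹ • y)) - z‖ ^ 2 - ‖y - z‖ ^ 2) / (2 * μ) := by
  set q := μ • (s - (F x - μ⁻¹ • y)) with hq
  have hres : F x - μ⁻¹ • y - s = -(μ⁻¹ • q) := by
    rw [hq, inv_smul_smul₀ hμ, neg_sub]
  have hF : F x = s + μ⁻¹ • (y - q) := by
    rw [smul_sub, sub_eq_add_neg _ (μ⁻¹ • q), ← hres]
    abel
  have hdist : Metric.infDist (F x - μ⁻¹ • y) K ^ 2 = μ⁻¹ ^ 2 * ‖q‖ ^ 2 := by
    rw [hs.infDist_eq, hres, norm_neg, norm_smul, mul_pow, Real.norm_eq_abs, sq_abs]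
  have hinner : ⟪z, F x⟫ = ⟪z, s⟫ + μ⁻¹ * (⟪y, z⟫ - ⟪q, z⟫) := by
    rw [hF, inner_add_right, real_inner_smul_right, inner_sub_right, real_inner_comm y,
      real_inner_comm q]
  rw [penaltyLagrangian, hdist, hinner, norm_sub_sq_real, norm_sub_sq_real]
  field_simp
  ring

theorem penaltyLagrangian_le_of_mem (hμ : 0 < μ) (hx : F x ∈ K) :
    penaltyLagrangian F K p μ x y ≤ p x := by
  have hdist : Metric.infDist (F x - μ⁻¹ • y) K ≤ μ⁻¹ * ‖y‖ := by
    have h := Metric.infDist_le_dist_of_mem (x := F x - μ⁻¹ • y) hx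
    rwa [dist_eq_norm, sub_sub_cancel_left, norm_neg, norm_smul,
      Real.norm_of_nonneg (inv_nonneg.2 hμ.le)] at h
  calc penaltyLagrangian F K p μ x y
      ≤ p x + μ / 2 * (μ⁻¹ * ‖y‖) ^ 2 - ‖y‖ ^ 2 / (2 * μ) := by
        unfold penaltyLagrangian
        gcongr
        exact Metric.infDist_nonneg
    _ = p x := by field_simp; ring

namespace IsLagrangeMultiplier

theorem add_le_penaltyLagrangian (hz : IsLagrangeMultiplier F K χ p v z) (hμ : 0 < μ) (hx : x ∈ χ)
    (hq : IsMultiplierUpdate F K μ x y q) :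
    v + (‖q - z‖ ^ 2 - ‖y - z‖ ^ 2) / (2 * μ) ≤ penaltyLagrangian F K p μ x y := by
  obtain ⟨s, hs, rfl⟩ := hq
  have hv : v ≤ p x - ⟪z, F x⟫ := hz.isGLB_lagrangian.1 ⟨x, hx, rfl⟩
  rw [penaltyLagrangian_eq_of_isNearestPoint (z := z) hμ.ne' hs]
  linarith [hz.inner_nonneg s hs.mem]

theorem sq_norm_update_sub_le (hz : IsLagrangeMultiplier F K χ p v z) (hμ : 0 < μ) (hx : x ∈ χ)
    (hq : IsMultiplierUpdate F K μ x y q)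
    (hmin : ∀ u ∈ χ, penaltyLagrangian F K p μ x y ≤ penaltyLagrangian F K p μ u y + ξ) :
    ‖q - z‖ ^ 2 ≤ ‖y - z‖ ^ 2 + 2 * ξ * μ := by
  have hupper : penaltyLagrangian F K p μ x y - ξ ≤ v := by
    refine hz.isGLB_primal.2 ?_
    rintro _ ⟨u, ⟨hu, huK⟩, rfl⟩
    linarith [hmin u hu, penaltyLagrangian_le_of_mem (p := p) (y := y) hμ huK]
  have hgap : (‖q - z‖ ^ 2 - ‖y - z‖ ^ 2) / (2 * μ) ≤ ξ := by
    linarith [hz.add_le_penaltyLagrangian hμ hx hq]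
  rw [div_le_iff₀ (by positivity)] at hgap
  linarith

theorem norm_update_sub_le (hz : IsLagrangeMultiplier F K χ p v z) (hμ : 0 < μ) (hx : x ∈ χ)
    (hq : IsMultiplierUpdate F K μ x y q)
    (hmin : ∀ u ∈ χ, penaltyLagrangian F K p μ x y ≤ penaltyLagrangian F K p μ u y + ξ) :
    ‖q - z‖ ≤ ‖y - z‖ + √(2 * ξ * μ) := by
  have hξ : 0 ≤ ξ := by linarith [hmin x hx]
  refine (sq_le_sq₀ (norm_nonneg _) (by positivity)).1 ?_
  calc ‖q - z‖ ^ 2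
      ≤ ‖y - z‖ ^ 2 + 2 * ξ * μ := hz.sq_norm_update_sub_le hμ hx hq hmin
    _ = ‖y - z‖ ^ 2 + √(2 * ξ * μ) ^ 2 := by rw [Real.sq_sqrt (by positivity)]
    _ ≤ (‖y - z‖ + √(2 * ξ * μ)) ^ 2 :=
      pow_add_pow_le (norm_nonneg _) (Real.sqrt_nonneg _) two_ne_zero

end IsLagrangeMultiplier

theorem le_tsum_add_of_le_add {a c : ℕ → ℝ} (hc : ∀ k, 0 ≤ c k) (hsum : Summable c)
    (hstep : ∀ k, a (k + 1) ≤ a k + c k) (k : ℕ) : a k ≤ (∑' j, c j) + a 0 := by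
  have htelescope : a k - a 0 ≤ ∑ j ∈ Finset.range k, c j := by
    rw [← Finset.sum_range_sub]
    exact Finset.sum_le_sum fun j _ => sub_le_iff_le_add'.2 (hstep j)
  linarith [hsum.sum_le_tsum (Finset.range k) fun j _ => hc j]

theorem stmt_16_general (hz : IsLagrangeMultiplier F K χ p v z) {μ ξ : ℕ → ℝ}
    (hμ : ∀ k, 1 ≤ k → 0 < μ k)
    (hsum : Summable fun k : ℕ => √(2 * ξ (k + 1) * μ (k + 1)))
    {x : ℕ → X} (hx : ∀ k, 1 ≤ k → x k ∈ χ) {y : ℕ → E} (hy1 : y 1 = 0)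
    (hupdate : ∀ k, 1 ≤ k → IsMultiplierUpdate F K (μ k) (x k) (y k) (y (k + 1)))
    (hmin : ∀ k, 1 ≤ k → ∀ u ∈ χ,
      penaltyLagrangian F K p (μ k) (x k) (y k) ≤ penaltyLagrangian F K p (μ k) u (y k) + ξ k) :
    ∀ k, 1 ≤ k →
      ‖y k - z‖ ≤ (∑' j : ℕ, √(2 * ξ (j + 1) * μ (j + 1))) + ‖z‖ ∧
      ‖y k‖ ≤ (∑' j : ℕ, √(2 * ξ (j + 1) * μ (j + 1))) + 2 * ‖z‖ := by
  have hstep (j : ℕ) : ‖y (j + 1 + 1) - z‖ ≤ ‖y (j + 1) - z‖ + √(2 * ξ (j + 1) * μ (j + 1)) := by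
    have hj : 1 ≤ j + 1 := j.succ_pos
    exact hz.norm_update_sub_le (hμ _ hj) (hx _ hj) (hupdate _ hj) (hmin _ hj)
  intro k hk
  obtain ⟨j, rfl⟩ := Nat.exists_eq_add_of_le' hk
  have hdist := le_tsum_add_of_le_add (a := fun i => ‖y (i + 1) - z‖)
    (fun _ => Real.sqrt_nonneg _) hsum hstep j
  simp only [zero_add, hy1, zero_sub, norm_neg] at hdist
  exact ⟨hdist, by linarith [norm_le_norm_sub_add (y (j + 1)) z]⟩

end PenaltyLagrangian

section ConicProgram

variable {n m : ℕ} {K : Set (EuclideanSpace ℝ (Fin m))}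
  {A : EuclideanSpace ℝ (Fin n) →ₗ[ℝ] EuclideanSpace ℝ (Fin m)}
  {b : EuclideanSpace ℝ (Fin m)} {χ : Set (EuclideanSpace ℝ (Fin n))}
  {p : EuclideanSpace ℝ (Fin n) → ℝ} {z : EuclideanSpace ℝ (Fin m)}

theorem isNearestPoint_projK (hne : K.Nonempty) (hcl : IsClosed K)
    (v : EuclideanSpace ℝ (Fin m)) : IsNearestPoint K v (projK K v) :=
  ⟨(projK_spec hne hcl v).1, (projK_spec hne hcl v).2⟩

theorem IsKKTPoint.isLagrangeMultiplier (hz : IsKKTPoint A b K χ p z) (hχ : IsCompact χ)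
    (hp : LowerSemicontinuousOn p χ) (hfeas : {x ∈ χ | A x - b ∈ K}.Nonempty) :
    IsLagrangeMultiplier (fun x => A x - b) K χ p (pstar A b K χ p) z := by
  have hprimal : BddBelow (p '' {x ∈ χ | A x - b ∈ K}) :=
    (hp.bddBelow_of_isCompact hχ).mono (Set.image_mono (Set.sep_subset _ _))
  have hlagrangian : BddBelow ((fun x => p x - ⟪z, A x - b⟫) '' χ) := by
    have hA : Continuous A := A.continuous_of_finiteDimensional
    have hinner : Continuous fun x => -⟪z, A x - b⟫ := by fun_prop
    simpa only [sub_eq_add_neg] using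
      (hp.add hinner.continuousOn.lowerSemicontinuousOn).bddBelow_of_isCompact hχ
  refine ⟨hz.1, isGLB_csInf (hfeas.image p) hprimal, ?_⟩
  rw [← hz.2]
  exact isGLB_csInf ((hfeas.mono (Set.sep_subset _ _)).image _) hlagrangian

theorem gmu_le_Lpen (hne : K.Nonempty) (hcl : IsClosed K) {v : ℝ}
    (hz : IsLagrangeMultiplier (fun x => A x - b) K χ p v z) {μ : ℝ} (hμ : 0 < μ)
    (y : EuclideanSpace ℝ (Fin m)) {u : EuclideanSpace ℝ (Fin n)} (hu : u ∈ χ) :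
    gmu A b K χ p μ y ≤ Lpen A b K p μ u y := by
  refine csInf_le ⟨v + (0 - ‖y - z‖ ^ 2) / (2 * μ), ?_⟩ ⟨u, hu, rfl⟩
  rintro _ ⟨x, hx, rfl⟩
  refine le_trans ?_ (hz.add_le_penaltyLagrangian hμ hx ⟨_, isNearestPoint_projK hne hcl _, rfl⟩)
  gcongr
  exact sq_nonneg _

end ConicProgram

/-- Boundedness of the dual iterates of the inexact augmented Lagrangian method. Only the values
of the objective `p` on `χ` matter; it is assumed convex and lower semicontinuous there, which
covers every closed convex extended-valued objective whose domain contains `χ`, and in particular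
every finite convex function on the whole space. -/
theorem stmt_16 {n m : ℕ} (K : Set (EuclideanSpace ℝ (Fin m)))
    (hKne : K.Nonempty) (hKcl : IsClosed K) (hKcv : Convex ℝ K)
    (hKcone : ∀ c : ℝ, 0 < c → ∀ s ∈ K, c • s ∈ K)
    (A : EuclideanSpace ℝ (Fin n) →ₗ[ℝ] EuclideanSpace ℝ (Fin m))
    (b : EuclideanSpace ℝ (Fin m))
    (χ : Set (EuclideanSpace ℝ (Fin n)))
    (hχcp : IsCompact χ) (hχcv : Convex ℝ χ)
    (p : EuclideanSpace ℝ (Fin n) → ℝ)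
    (hp : ConvexOn ℝ χ p) (hplsc : LowerSemicontinuousOn p χ)
    (hfeas : {x ∈ χ | A x - b ∈ K}.Nonempty)
    (ystar : EuclideanSpace ℝ (Fin m)) (hystar : IsKKTPoint A b K χ p ystar)
    (μ : ℕ → ℝ) (ξ : ℕ → ℝ)
    (hμ : ∀ k, 1 ≤ k → 0 < μ k) (hξ : ∀ k, 1 ≤ k → 0 ≤ ξ k)
    (hsum : Summable (fun k : ℕ => Real.sqrt (2 * ξ (k + 1) * μ (k + 1))))
    (x : ℕ → EuclideanSpace ℝ (Fin n)) (hx : ∀ k, 1 ≤ k → x k ∈ χ)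
    (y : ℕ → EuclideanSpace ℝ (Fin m)) (hy1 : y 1 = 0)
    (hyrec : ∀ k, 1 ≤ k → y (k + 1)
      = μ k • (projK K (A (x k) - b - (μ k)⁻¹ • y k) - (A (x k) - b - (μ k)⁻¹ • y k)))
    (hL : ∀ k, 1 ≤ k →
      Lpen A b K p (μ k) (x k) (y k) ≤ gmu A b K χ p (μ k) (y k) + ξ k) :
    ∀ k, 1 ≤ k →
      ‖y k - ystar‖ ≤ (∑' j : ℕ, Real.sqrt (2 * ξ (j + 1) * μ (j + 1))) + ‖ystar‖ ∧
      ‖y k‖ ≤ (∑' j : ℕ, Real.sqrt (2 * ξ (j + 1) * μ (j + 1))) + 2 * ‖ystar‖ := by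
  have hz := hystar.isLagrangeMultiplier hχcp hplsc hfeas
  exact stmt_16_general hz hμ hsum hx hy1
    (fun k hk => ⟨_, isNearestPoint_projK hKne hKcl _, hyrec k hk⟩)
    fun k hk u hu => (hL k hk).trans (add_le_add_left (gmu_le_Lpen hKne hKcl hz (hμ k hk) _ hu) _)
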